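/- arXiv:math/0607181 — 7 statements merged into one kernel-verified Lean document; each statement's English description precedes it below -/
import Mathlib

section
/- Let T > 0 and α > 0 be constants, let δ : ℝ → ℝ be continuous and nonnegative on [0,T], and let y : ℝ → ℝ be differentiable on [0,T] with y(0) = y₀ ≥ 0 and y'(t) ≤ δ(t) + α·y(t)² for every t ∈ [0,T]. Set η = y₀ + ∫₀ᵀ δ(s) ds. Then for every t ∈ [0,T] with α·η·t < 1 one has y(t) ≤ η / (1 − α·η·t). -/
/-!
The bound is a barrier argument. Fix `t₀` with `α η t₀ < 1`. For small `ε > 0` put `β = α + ε`,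
`m = η + ε` and let `F t = m / (1 - β m t)`, the solution of `F' = β F²`, `F 0 = m`, which is finite
on `[0, t₀]`. The barrier is `B t = F t - ∫ₜᵀ δ`. It satisfies `B 0 = y₀ + ε`, `0 < B ≤ F`, and
`B' = β F² + δ > δ + α B²`; the strict inequality lets the fencing theorem
`image_le_of_deriv_right_lt_deriv_boundary'` give `y ≤ B ≤ F` on `[0, t₀]`. Because the differential
inequality is only used at points where `y = B > 0`, large negative values of `y` are harmless.
Letting `ε → 0` gives the claim.
-/

open Set MeasureTheory Filter Topology

/-- The comparison with the perturbed blow-up profile `m / (1 - β m t)`, where `β > α` and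
`m > y₀ + ∫₀ᵀ δ`. -/
lemma le_perturbed_profile {T α β m t₀ : ℝ} (hα : 0 < α) (hβ : α < β)
    {δ y y' : ℝ → ℝ} (hδ : Continuous δ) (hδ0 : ∀ t, 0 ≤ δ t)
    (hderiv : ∀ t ∈ Icc (0:ℝ) T, HasDerivWithinAt y (y' t) (Icc 0 T) t)
    (hy₀ : 0 ≤ y 0)
    (hineq : ∀ t ∈ Icc (0:ℝ) T, y' t ≤ δ t + α * (y t) ^ 2)
    (hm : y 0 + (∫ s in (0:ℝ)..T, δ s) < m)
    (ht₀ : t₀ ∈ Icc (0:ℝ) T) (hlt : β * m * t₀ < 1) :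
    y t₀ ≤ m / (1 - β * m * t₀) := by
  have hint : ∀ a b, IntervalIntegrable δ volume a b := fun a b => hδ.intervalIntegrable a b
  have htail : ∀ t ∈ Icc (0:ℝ) T,
      0 ≤ (∫ s in (0:ℝ)..T, δ s) - ∫ s in (0:ℝ)..t, δ s := fun t ht => by
    rw [intervalIntegral.integral_interval_sub_left (hint _ _) (hint _ _)]
    exact intervalIntegral.integral_nonneg ht.2 fun s _ => hδ0 s
  have hP : ∀ t, 0 ≤ t → 0 ≤ ∫ s in (0:ℝ)..t, δ s := fun t ht =>
    intervalIntegral.integral_nonneg ht fun s _ => hδ0 s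
  have hm0 : 0 < m := by
    have := hP T (ht₀.1.trans ht₀.2)
    linarith
  have hβm : 0 < β * m := mul_pos (hα.trans hβ) hm0
  have hden : ∀ t ∈ Icc (0:ℝ) t₀, 0 < 1 - β * m * t := fun t ht => by
    have := mul_le_mul_of_nonneg_left ht.2 hβm.le
    linarith
  have hBderiv : ∀ t ∈ Icc (0:ℝ) t₀, HasDerivAt
      (fun t => m / (1 - β * m * t) - ((∫ s in (0:ℝ)..T, δ s) - ∫ s in (0:ℝ)..t, δ s))
      (β * (m / (1 - β * m * t)) ^ 2 + δ t) t := fun t ht => by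
    have h1 : HasDerivAt (fun t => 1 - β * m * t) (-(β * m)) t := by
      simpa using ((hasDerivAt_id t).const_mul (β * m)).const_sub 1
    have h2 := (hasDerivAt_const t m).div h1 (hden t ht).ne'
    have h3 := (hδ.integral_hasStrictDerivAt 0 t).hasDerivAt.const_sub (∫ s in (0:ℝ)..T, δ s)
    refine (h2.sub h3).congr_deriv ?_
    have := (hden t ht).ne'
    field_simp
    ring
  have hsub : Icc 0 t₀ ⊆ Icc 0 T := Icc_subset_Icc_right ht₀.2
  have key := image_le_of_deriv_right_lt_deriv_boundary' (f := y) (f' := y') (a := 0) (b := t₀)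
    (fun t ht => ((hderiv t (hsub ht)).mono hsub).continuousWithinAt)
    (fun t ht => ((hderiv t (hsub (Ico_subset_Icc_self ht))).mono_of_mem_nhdsWithin
      (mem_of_superset (Icc_mem_nhdsGE (ht.2.trans_le ht₀.2)) (Icc_subset_Icc_left ht.1))))
    (B := fun t => m / (1 - β * m * t) - ((∫ s in (0:ℝ)..T, δ s) - ∫ s in (0:ℝ)..t, δ s))
    (by simp; linarith)
    (fun t ht => (hBderiv t ht).continuousAt.continuousWithinAt)
    (fun t ht => (hBderiv t (Ico_subset_Icc_self ht)).hasDerivWithinAt)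
    (fun t ht hyB => by
      have ht' := Ico_subset_Icc_self ht
      have hFm : m ≤ m / (1 - β * m * t) := by
        rw [le_div_iff₀ (hden t ht')]
        nlinarith [mul_nonneg hm0.le (mul_nonneg hβm.le ht.1)]
      have h1 := htail t (hsub ht')
      have h2 := hP t ht.1
      have h3 := hineq t (hsub ht')
      have hy0 : 0 ≤ y t := by linarith
      have hyF : y t ≤ m / (1 - β * m * t) := by linarith
      have hsq : y t ^ 2 ≤ (m / (1 - β * m * t)) ^ 2 := pow_le_pow_left₀ hy0 hyF 2
      have hFpos : 0 < (m / (1 - β * m * t)) ^ 2 := pow_pos (hm0.trans_le hFm) 2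
      have h4 := mul_le_mul_of_nonneg_left hsq hα.le
      have h5 := mul_lt_mul_of_pos_right hβ hFpos
      linarith)
    (right_mem_Icc.2 ht₀.1)
  have := htail t₀ ht₀
  linarith

/-- ODE lemma: if `y' ≤ δ(t) + α y²` on `[0,T]` with `y(0) = y₀ ≥ 0`, then with
`η = y₀ + ∫₀ᵀ δ`, one has `y(t) ≤ η / (1 - α η t)` whenever `α η t < 1`. -/
theorem ode_blowup_bound
    (T α y₀ : ℝ) (hT : 0 < T) (hα : 0 < α)
    (δ y y' : ℝ → ℝ)
    (hδcont : ContinuousOn δ (Icc 0 T))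
    (hδnonneg : ∀ t ∈ Icc (0:ℝ) T, 0 ≤ δ t)
    (hderiv : ∀ t ∈ Icc (0:ℝ) T, HasDerivWithinAt y (y' t) (Icc 0 T) t)
    (hy0 : y 0 = y₀) (hy₀ : 0 ≤ y₀)
    (hineq : ∀ t ∈ Icc (0:ℝ) T, y' t ≤ δ t + α * (y t) ^ 2)
    (η : ℝ) (hη : η = y₀ + ∫ s in (0:ℝ)..T, δ s) :
    ∀ t ∈ Icc (0:ℝ) T, α * η * t < 1 → y t ≤ η / (1 - α * η * t) := by
  intro t ht hlt
  -- Extending `δ` by constants outside `[0, T]` makes its primitive differentiable everywhere.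
  set δ' : ℝ → ℝ := IccExtend hT.le ((Icc 0 T).domRestrict δ) with hδ'
  have heq : ∀ s ∈ Icc (0:ℝ) T, δ' s = δ s := fun s hs => by
    rw [hδ', IccExtend_of_mem _ _ hs, domRestrict_apply]
  have hδ'c : Continuous δ' := (continuousOn_iff_continuous_domRestrict.1 hδcont).Icc_extend'
  have hδ'0 : ∀ s, 0 ≤ δ' s := fun s => hδnonneg _ (projIcc 0 T hT.le s).2
  have hI : ∫ s in (0:ℝ)..T, δ' s = ∫ s in (0:ℝ)..T, δ s :=
    intervalIntegral.integral_congr fun s hs => heq s (by rwa [uIcc_of_le hT.le] at hs)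
  have hden : Tendsto (fun ε : ℝ => (α + ε) * (η + ε) * t) (𝓝[>] 0) (𝓝 (α * η * t)) := by
    have : Continuous fun ε : ℝ => (α + ε) * (η + ε) * t := by fun_prop
    simpa using (this.tendsto 0).mono_left nhdsWithin_le_nhds
  have hnum : Tendsto (fun ε : ℝ => η + ε) (𝓝[>] 0) (𝓝 η) := by
    have : Continuous fun ε : ℝ => η + ε := by fun_prop
    simpa using (this.tendsto 0).mono_left nhdsWithin_le_nhds
  refine ge_of_tendsto (hnum.div (hden.const_sub 1) (sub_pos.2 hlt).ne') ?_
  filter_upwards [hden.eventually_lt_const hlt, self_mem_nhdsWithin] with ε hε hpos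
  have hpos' : 0 < ε := hpos
  exact le_perturbed_profile hα (by linarith) hδ'c hδ'0 hderiv (hy0 ▸ hy₀)
    (fun s hs => by rw [heq s hs]; exact hineq s hs) (by rw [hI, hy0]; linarith) ht hε
end

section
/- Let T > 0 and α > 0 be constants, let δ : ℝ → ℝ be continuous and nonnegative on [0,T], and let y : ℝ → ℝ be differentiable on [0,T] with y(0) = y₀ ≥ 0 and y'(t) ≤ δ(t) + α·y(t)² for every t ∈ [0,T]. Set η = y₀ + ∫₀ᵀ δ(s) ds. If α·η·T < 1, then y(t) ≤ η / (1 − α·η·T) for every t ∈ [0,T]; in particular y remains bounded on [0,T]. -/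
/-!
The bound comes from a strict supersolution. For `ε > 0` put `w(t) = μ / (1 - βμt)` with
`μ = η + ε` and `β = α + ε`, so that `w' = βw²`, and let `B(t) = w(t) - ∫ₜᵀ δ`, written below as
`w(t) - (∫₀ᵀ δ - ∫₀ᵗ δ)`. Since `0 ≤ ∫ₜᵀ δ ≤ η < w(t)`, one has `0 < B ≤ w`, and hence
`B' = δ + βw² > δ + αB²`, while `y(0) ≤ B(0)`. The fencing theorem gives
`y ≤ B ≤ w ≤ w(T) = μ / (1 - βμT)`, and `ε → 0` concludes.
-/

open Set MeasureTheory

/-- The comparison with the strict supersolution `B = w - (D T - D t)`, for a primitive `D` of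
`δ` and a slightly increased initial value `μ > η` and coefficient `β > α`. -/
theorem le_of_strict_supersolution
    {T α β μ : ℝ} (hT : 0 < T) (hα : 0 < α) (hαβ : α < β)
    {δ D y y' : ℝ → ℝ}
    (hD : ∀ t ∈ Icc (0:ℝ) T, HasDerivAt D (δ t) t) (hDmono : Monotone D) (hD0 : D 0 = 0)
    (hderiv : ∀ t ∈ Icc (0:ℝ) T, HasDerivWithinAt y (y' t) (Icc 0 T) t)
    (hy0 : 0 ≤ y 0)
    (hineq : ∀ t ∈ Icc (0:ℝ) T, y' t ≤ δ t + α * (y t) ^ 2)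
    (hμ : y 0 + D T < μ) (hsmall : β * μ * T < 1) :
    ∀ t ∈ Icc (0:ℝ) T, y t ≤ μ / (1 - β * μ * T) := by
  have hβ : 0 < β := hα.trans hαβ
  have hDT : 0 ≤ D T := hD0 ▸ hDmono hT.le
  have hμ0 : 0 < μ := by linarith
  have hβμ : 0 < β * μ := mul_pos hβ hμ0
  have hden : ∀ t ∈ Icc (0:ℝ) T, 0 < 1 - β * μ * t := fun t ht => by
    nlinarith [mul_le_mul_of_nonneg_left ht.2 hβμ.le]
  have hw : ∀ t ∈ Icc (0:ℝ) T, μ ≤ μ / (1 - β * μ * t) := fun t ht => by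
    rw [le_div_iff₀ (hden t ht)]
    nlinarith [mul_nonneg hμ0.le (mul_nonneg hβμ.le ht.1)]
  have hB : ∀ t ∈ Icc (0:ℝ) T, HasDerivAt (fun t => μ / (1 - β * μ * t) - (D T - D t))
      (δ t + β * (μ / (1 - β * μ * t)) ^ 2) t := fun t ht => by
    have hne := (hden t ht).ne'
    have h1 : HasDerivAt (fun t : ℝ => 1 - β * μ * t) (-(β * μ)) t := by
      simpa using ((hasDerivAt_id t).const_mul (β * μ)).const_sub 1
    have h2 := ((hasDerivAt_const t μ).fun_div h1 hne).fun_sub ((hD t ht).const_sub (D T))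
    refine h2.congr_deriv ?_
    field_simp
    ring
  intro t ht
  have hyB : y t ≤ μ / (1 - β * μ * t) - (D T - D t) := by
    refine image_le_of_deriv_right_lt_deriv_boundary'
      (f := y) (f' := y') (B := fun t => μ / (1 - β * μ * t) - (D T - D t))
      (B' := fun t => δ t + β * (μ / (1 - β * μ * t)) ^ 2) (a := 0) (b := T)
      (fun s hs => (hderiv s hs).continuousWithinAt) (fun s hs => ?_) ?_
      (fun s hs => (hB s hs).continuousAt.continuousWithinAt)
      (fun s hs => (hB s (Ico_subset_Icc_self hs)).hasDerivWithinAt) (fun s hs hys => ?_) ht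
    · exact (hderiv s (Ico_subset_Icc_self hs)).mono_of_mem_nhdsWithin
        (Icc_mem_nhdsGE_of_mem hs)
    · simp only [mul_zero, sub_zero, div_one, hD0]
      linarith
    · have hs' := Ico_subset_Icc_self hs
      have hws := hw s hs'
      have hDs0 : 0 ≤ D s := hD0 ▸ hDmono hs.1
      have hDsT : D s ≤ D T := hDmono hs.2.le
      have hle := hineq s hs'
      have hsq : y s ^ 2 ≤ (μ / (1 - β * μ * s)) ^ 2 := by
        rw [hys]
        exact pow_le_pow_left₀ (by linarith) (by linarith) 2
      have hwpos : 0 < (μ / (1 - β * μ * s)) ^ 2 := pow_pos (by linarith) 2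
      have h3 := mul_le_mul_of_nonneg_left hsq hα.le
      have h4 := mul_lt_mul_of_pos_right hαβ hwpos
      linarith
  have hDtT : D t ≤ D T := hDmono ht.2
  have hwT : μ / (1 - β * μ * t) ≤ μ / (1 - β * μ * T) :=
    div_le_div_of_nonneg_left hμ0.le (hden T ⟨hT.le, le_rfl⟩)
      (by linarith [mul_le_mul_of_nonneg_left ht.2 hβμ.le])
  linarith

/-- ODE lemma: if `y' ≤ δ(t) + α y²` on `[0,T]` with `y(0) = y₀ ≥ 0`, and
`η = y₀ + ∫₀ᵀ δ` satisfies `α η T < 1`, then `y(t) ≤ η / (1 - α η T)` on `[0,T]`,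
so `y` remains bounded on `[0,T]`. -/
theorem ode_bounded_on_interval
    (T α y₀ : ℝ) (hT : 0 < T) (hα : 0 < α)
    (δ y y' : ℝ → ℝ)
    (hδcont : ContinuousOn δ (Icc 0 T))
    (hδnonneg : ∀ t ∈ Icc (0:ℝ) T, 0 ≤ δ t)
    (hderiv : ∀ t ∈ Icc (0:ℝ) T, HasDerivWithinAt y (y' t) (Icc 0 T) t)
    (hy0 : y 0 = y₀) (hy₀ : 0 ≤ y₀)
    (hineq : ∀ t ∈ Icc (0:ℝ) T, y' t ≤ δ t + α * (y t) ^ 2)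
    (η : ℝ) (hη : η = y₀ + ∫ s in (0:ℝ)..T, δ s)
    (hsmall : α * η * T < 1) :
    ∀ t ∈ Icc (0:ℝ) T, y t ≤ η / (1 - α * η * T) := by
  intro t ht
  -- Extending `δ` by constants makes its primitive differentiable at the endpoints as well.
  set d : ℝ → ℝ := IccExtend hT.le ((Icc 0 T).domRestrict δ) with hd
  have hdc : Continuous d := (continuousOn_iff_continuous_domRestrict.1 hδcont).Icc_extend'
  have hdeq : ∀ s ∈ Icc (0:ℝ) T, d s = δ s := fun s hs => by
    rw [hd, IccExtend_of_mem _ _ hs]; rfl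
  have hdnonneg : ∀ s, 0 ≤ d s := fun s => hδnonneg _ (projIcc 0 T hT.le s).2
  have hdD : ∀ s, HasDerivAt (fun u => ∫ x in (0:ℝ)..u, d x) (d s) s := fun s =>
    intervalIntegral.integral_hasDerivAt_right (hdc.intervalIntegrable _ _)
      (hdc.stronglyMeasurableAtFilter _ _) hdc.continuousAt
  have hint : ∫ x in (0:ℝ)..T, d x = ∫ x in (0:ℝ)..T, δ x :=
    intervalIntegral.integral_congr fun s hs => hdeq s (by rwa [uIcc_of_le hT.le] at hs)
  have hcont : ContinuousAt (fun ε : ℝ => (α + ε) * (η + ε) * T) 0 := by fun_prop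
  have hlim : Filter.Tendsto (fun ε : ℝ => (η + ε) / (1 - (α + ε) * (η + ε) * T))
      (nhdsWithin 0 (Ioi 0)) (nhds (η / (1 - α * η * T))) := by
    have h : ContinuousAt (fun ε : ℝ => (η + ε) / (1 - (α + ε) * (η + ε) * T)) 0 := by
      refine ContinuousAt.div (by fun_prop) (by fun_prop) ?_
      simpa using (sub_pos.2 hsmall).ne'
    simpa using h.tendsto.mono_left nhdsWithin_le_nhds
  have hev : ∀ᶠ ε in nhdsWithin (0:ℝ) (Ioi 0), (α + ε) * (η + ε) * T < 1 :=
    (hcont.eventually_lt continuousAt_const (by simpa using hsmall)).filter_mono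
      nhdsWithin_le_nhds
  refine ge_of_tendsto hlim ?_
  filter_upwards [hev, self_mem_nhdsWithin] with ε hε hε0
  have hε0' : 0 < ε := hε0
  refine le_of_strict_supersolution hT hα (by linarith) (D := fun u => ∫ x in (0:ℝ)..u, d x)
    (fun s hs => hdeq s hs ▸ hdD s) ?_ (by simp) hderiv (hy0 ▸ hy₀) hineq ?_ hε t ht
  · exact monotone_of_hasDerivAt_nonneg hdD hdnonneg
  · simp only [hint, hy0]
    linarith
end

section
/- Let T > 0 and α > 0 be constants. For every ε > 0 there exists η₀ > 0 (depending only on α, T and ε) with the following property: whenever δ : ℝ → ℝ is continuous and nonnegative on [0,T] and y : ℝ → ℝ is differentiable on [0,T] with y(0) = y₀ ≥ 0, y'(t) ≤ δ(t) + α·y(t)² for every t ∈ [0,T], and η := y₀ + ∫₀ᵀ δ(s) ds ≤ η₀, then 0 ≤ y(t) implies y(t) ≤ ε for every t ∈ [0,T] (i.e. y(t) ≤ ε uniformly on [0,T]; thus y → 0 uniformly on [0,T] as η → 0). -/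
/-! The proof compares `y` with the fence `B t = y₀ + ∫₀ᵗ δ + c t`. With `m = min ε (1 / (4αT))`,
`η₀ = m / 2` and `c = m / (2T)` one has `0 ≤ B ≤ m` on `[0,T]`, so wherever `y` touches `B`,
`y' ≤ δ + α m² ≤ δ + m / (4T) < δ + c = B'`. Hence `y` cannot cross `B`, and `y ≤ B ≤ m ≤ ε`. -/

open Set MeasureTheory

/-- Uniform smallness: for every `ε > 0` there is `η₀ > 0` (depending only on `α, T, ε`)
such that whenever `y' ≤ δ(t) + α y²` on `[0,T]`, `y(0) = y₀ ≥ 0`, and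
`η = y₀ + ∫₀ᵀ δ ≤ η₀`, then `0 ≤ y(t)` implies `y(t) ≤ ε` for every `t ∈ [0,T]`. -/
theorem ode_uniform_smallness
    (T α : ℝ) (hT : 0 < T) (hα : 0 < α) :
    ∀ ε > (0:ℝ), ∃ η₀ > (0:ℝ),
      ∀ (δ y y' : ℝ → ℝ) (y₀ : ℝ),
        ContinuousOn δ (Icc 0 T) →
        (∀ t ∈ Icc (0:ℝ) T, 0 ≤ δ t) →
        (∀ t ∈ Icc (0:ℝ) T, HasDerivWithinAt y (y' t) (Icc 0 T) t) →
        y 0 = y₀ → 0 ≤ y₀ →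
        (∀ t ∈ Icc (0:ℝ) T, y' t ≤ δ t + α * (y t) ^ 2) →
        y₀ + (∫ s in (0:ℝ)..T, δ s) ≤ η₀ →
        ∀ t ∈ Icc (0:ℝ) T, 0 ≤ y t → y t ≤ ε := by
  intro ε hε
  obtain ⟨m, hm0, hmε, hmα⟩ : ∃ m > 0, m ≤ ε ∧ m ≤ 1 / (4 * α * T) :=
    ⟨min ε (1 / (4 * α * T)), lt_min hε (by positivity), min_le_left _ _, min_le_right _ _⟩
  refine ⟨m / 2, by positivity, ?_⟩
  intro δ y y' y₀ hδ hδ0 hy hy0 hy₀ hbound hη t ht _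
  -- A globally continuous extension of `δ`, so that its primitive is differentiable everywhere.
  obtain ⟨D, hD, hDδ⟩ : ∃ D : ℝ → ℝ, Continuous D ∧ ∀ s ∈ Icc 0 T, D s = δ s :=
    ⟨IccExtend hT.le ((Icc 0 T).domRestrict δ), hδ.domRestrict.Icc_extend',
      fun s hs => IccExtend_of_mem hT.le _ hs⟩
  have hint : ∫ s in (0:ℝ)..T, δ s = ∫ s in (0:ℝ)..T, D s := by
    refine intervalIntegral.integral_congr fun s hs => ?_
    rw [uIcc_of_le hT.le] at hs
    exact (hDδ s hs).symm
  rw [hint] at hη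
  have hD0 : ∀ s ∈ Icc 0 T, 0 ≤ D s := fun s hs => (hDδ s hs).symm ▸ hδ0 s hs
  have hI0 : ∀ x ∈ Icc 0 T, 0 ≤ ∫ s in (0:ℝ)..x, D s := fun x hx =>
    intervalIntegral.integral_nonneg hx.1 fun s hs => hD0 s ⟨hs.1, hs.2.trans hx.2⟩
  have hIT : ∀ x ∈ Icc 0 T, ∫ s in (0:ℝ)..x, D s ≤ ∫ s in (0:ℝ)..T, D s := by
    intro x hx
    rw [← intervalIntegral.integral_add_adjacent_intervals
      (hD.intervalIntegrable 0 x) (hD.intervalIntegrable x T)]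
    linarith [intervalIntegral.integral_nonneg (μ := volume) hx.2
      fun s hs => hD0 s ⟨hx.1.trans hs.1, hs.2⟩]
  have hcT : m / (2 * T) * T = m / 2 := by field_simp
  have hc0 : 0 < m / (2 * T) := by positivity
  have hBm : ∀ x ∈ Icc 0 T, y₀ + (∫ s in (0:ℝ)..x, D s) + m / (2 * T) * x ≤ m := by
    intro x hx
    linarith [hIT x hx, mul_le_mul_of_nonneg_left hx.2 hc0.le]
  have hαm : α * m ^ 2 < m / (2 * T) := by
    rw [le_div_iff₀ (by positivity)] at hmα
    rw [lt_div_iff₀ (by positivity)]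
    nlinarith
  have key : ∀ ⦃x⦄, x ∈ Icc 0 T → y x ≤ y₀ + (∫ s in (0:ℝ)..x, D s) + m / (2 * T) * x := by
    refine image_le_of_deriv_right_lt_deriv_boundary (f' := y')
      (B' := fun x => D x + m / (2 * T))
      (fun x hx => (hy x hx).continuousWithinAt) ?_ ?_ ?_ ?_
    · intro x hx
      exact (hy x (Ico_subset_Icc_self hx)).mono_of_mem_nhdsWithin
        (Icc_mem_nhdsGE_of_mem hx)
    · simp [hy0]
    · intro x
      have h1 := (hD.integral_hasStrictDerivAt 0 x).hasDerivAt.const_add y₀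
      simpa using h1.fun_add ((hasDerivAt_id x).const_mul (m / (2 * T)))
    · intro x hx hxB
      have hx' := Ico_subset_Icc_self hx
      have hy_nonneg : 0 ≤ y x := by
        rw [hxB]
        have := hI0 x hx'
        have := mul_nonneg hc0.le hx.1
        linarith
      have hym : y x ≤ m := hxB.trans_le (hBm x hx')
      have hsq : α * y x ^ 2 ≤ α * m ^ 2 := by gcongr
      have := hbound x hx'
      rw [← hDδ x hx'] at this
      change y' x < D x + m / (2 * T)
      linarith
  exact (key ht).trans ((hBm t ht).trans hmε)
end

section
/- Let T > 0 and α > 0 be constants and let δ : ℝ → ℝ be continuous on [0,T]. Suppose y, Y : ℝ → ℝ are differentiable on [0,T], that y'(t) ≤ δ(t) + α·y(t)² for every t ∈ [0,T], that Y'(t) = δ(t) + α·Y(t)² for every t ∈ [0,T], and that y(0) ≤ Y(0). Then y(t) ≤ Y(t) for every t ∈ [0,T]. -/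
/-!
The difference `w = y - Y` satisfies `w' ≤ α (y + Y) w`, and the coefficient `α (y + Y)` is
continuous on `[0,T]`, hence at most some constant `M` there. For each `ε > 0` the function
`ε exp((M + 1) t)` is a strict barrier: wherever `w` meets it, `w` is positive, so
`w' ≤ M w < (M + 1) w`, and the fencing theorem `image_le_of_deriv_right_lt_deriv_boundary` shows
that `w` stays below it. Letting `ε → 0` gives `w ≤ 0`.
-/

open Set MeasureTheory

/-- Comparison principle: if `y' ≤ δ(t) + α y²`, `Y' = δ(t) + α Y²` on `[0,T]` and
`y(0) ≤ Y(0)`, then `y(t) ≤ Y(t)` on `[0,T]`. -/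
theorem ode_comparison
    (T α : ℝ) (hT : 0 < T) (hα : 0 < α)
    (δ y y' Y Y' : ℝ → ℝ)
    (hδcont : ContinuousOn δ (Icc 0 T))
    (hyderiv : ∀ t ∈ Icc (0:ℝ) T, HasDerivWithinAt y (y' t) (Icc 0 T) t)
    (hYderiv : ∀ t ∈ Icc (0:ℝ) T, HasDerivWithinAt Y (Y' t) (Icc 0 T) t)
    (hyineq : ∀ t ∈ Icc (0:ℝ) T, y' t ≤ δ t + α * (y t) ^ 2)
    (hYode : ∀ t ∈ Icc (0:ℝ) T, Y' t = δ t + α * (Y t) ^ 2)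
    (h0 : y 0 ≤ Y 0) :
    ∀ t ∈ Icc (0:ℝ) T, y t ≤ Y t := by
  have hyc : ContinuousOn y (Icc 0 T) := fun t ht => (hyderiv t ht).continuousWithinAt
  have hYc : ContinuousOn Y (Icc 0 T) := fun t ht => (hYderiv t ht).continuousWithinAt
  obtain ⟨M, hM⟩ := isCompact_Icc.bddAbove_image (continuousOn_const (c := α) |>.mul (hyc.add hYc))
  have hM' : ∀ t ∈ Icc (0:ℝ) T, α * (y t + Y t) ≤ M := fun t ht => hM ⟨t, ht, rfl⟩
  have barrier : ∀ ε > 0, ∀ t ∈ Icc (0:ℝ) T, y t - Y t ≤ ε * Real.exp ((M + 1) * t) := by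
    intro ε hε t ht
    refine image_le_of_deriv_right_lt_deriv_boundary (f := fun t => y t - Y t)
      (f' := fun t => y' t - Y' t) (B := fun t => ε * Real.exp ((M + 1) * t))
      (B' := fun t => ε * (Real.exp ((M + 1) * t) * (M + 1))) (hyc.sub hYc) ?_ ?_ ?_ ?_ ht
    · intro x hx
      have hx' := Ico_subset_Icc_self hx
      exact ((hyderiv x hx').sub (hYderiv x hx')).mono_of_mem_nhdsWithin
        (Icc_mem_nhdsGE_of_mem hx)
    · simp only [mul_zero, Real.exp_zero, mul_one]
      linarith
    · intro x
      have h := ((hasDerivAt_id x).const_mul (M + 1)).exp.const_mul ε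
      simpa using h
    · intro x hx hxB
      have hx' := Ico_subset_Icc_self hx
      have hpos : 0 < ε * Real.exp ((M + 1) * x) := by positivity
      rw [← mul_assoc, ← hxB]
      rw [← hxB] at hpos
      nlinarith [hyineq x hx', hYode x hx', mul_le_mul_of_nonneg_right (hM' x hx') hpos.le]
  intro t ht
  refine le_of_forall_pos_le_add fun η hη => ?_
  have hE := Real.exp_pos ((M + 1) * t)
  -- With this `ε` the barrier takes the value `η` at time `t`.
  have h := barrier (η / Real.exp ((M + 1) * t)) (div_pos hη hE) t ht
  rw [div_mul_cancel₀ _ hE.ne'] at h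
  linarith
end

section
/- Let T > 0 and c > 0 be constants, let a, δ : ℝ → ℝ be continuous and nonnegative on [0,T], and let w : ℝ → ℝ be differentiable and nonnegative on [0,T] with w(0) = w₀ and w'(t) ≤ δ(t) + a(t)·w(t) + c·w(t)² for every t ∈ [0,T]. Set α = c·exp(∫₀ᵀ a(s) ds) and η = w₀ + ∫₀ᵀ δ(s) ds. If α·η·T < 1, then for every t ∈ [0,T] one has w(t) ≤ exp(∫₀ᵗ a(s) ds) · η / (1 − α·η·t); in particular w remains bounded on [0,T]. -/
open Set MeasureTheory

/-!
The substitution `y = w · exp (-∫₀ᵗ a)` removes the linear term: `y' ≤ δ + α y²`. The Riccati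
solution `z(t) = η / (1 - α η t)` solves `z' = α z²`, `z(0) = η`, and the function
`B(t) = z(t) - ∫ₜᵀ δ` is an upper barrier for `y`: it starts at `w₀`, and wherever `y = B` one has
`0 ≤ y ≤ z`, so `y' ≤ δ + α y² ≤ δ + α z² = B'`. Since the fencing theorem
`image_le_of_deriv_right_lt_deriv_boundary'` needs strict inequality at contact points, it is
applied with `α + ε`, `η + ε` in place of `α`, `η` (`riccati_le`), and then `ε → 0⁺`.
-/

/-- The fundamental theorem of calculus on `[0,T]`, one-sided at the endpoints. -/
lemma hasDerivWithinAt_primitive {T : ℝ} {f : ℝ → ℝ}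
    (hf : ContinuousOn f (Icc 0 T)) {t : ℝ} (ht : t ∈ Icc (0:ℝ) T) :
    HasDerivWithinAt (fun u => ∫ s in (0:ℝ)..u, f s) (f t) (Icc 0 T) t := by
  have : Fact (t ∈ Icc (0:ℝ) T) := ⟨ht⟩
  refine intervalIntegral.integral_hasDerivWithinAt_right ?_ ?_ (hf t ht)
  · apply ContinuousOn.intervalIntegrable
    rw [uIcc_of_le ht.1]
    exact hf.mono (Icc_subset_Icc_right ht.2)
  · exact hf.stronglyMeasurableAtFilter_nhdsWithin measurableSet_Icc t

/-- Comparison for `y' ≤ δ + α y²` with strictly enlarged Riccati data `β > α` and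
`ζ ≥ y 0 + ∫₀ᵀ δ`. -/
lemma riccati_le {T α β ζ : ℝ} (hT : 0 < T) (hα : 0 ≤ α) (hβ : α < β) (hζ : 0 < ζ)
    (hsmall : β * ζ * T < 1) {δ y y' : ℝ → ℝ}
    (hδcont : ContinuousOn δ (Icc 0 T)) (hδnonneg : ∀ t ∈ Icc (0:ℝ) T, 0 ≤ δ t)
    (hderiv : ∀ t ∈ Icc (0:ℝ) T, HasDerivWithinAt y (y' t) (Icc 0 T) t)
    (hy : ∀ t ∈ Icc (0:ℝ) T, 0 ≤ y t)
    (hineq : ∀ t ∈ Icc (0:ℝ) T, y' t ≤ δ t + α * y t ^ 2)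
    (h0 : y 0 + ∫ s in (0:ℝ)..T, δ s ≤ ζ) :
    ∀ t ∈ Icc (0:ℝ) T, y t ≤ ζ / (1 - β * ζ * t) := by
  have hpos : ∀ t ∈ Icc (0:ℝ) T, 0 < 1 - β * ζ * t := fun t ht => by
    have : β * ζ * t ≤ β * ζ * T :=
      mul_le_mul_of_nonneg_left ht.2 (mul_nonneg (hα.trans hβ.le) hζ.le)
    linarith
  have hint : ∀ t ∈ Icc (0:ℝ) T, ∫ s in (0:ℝ)..t, δ s ≤ ∫ s in (0:ℝ)..T, δ s := fun t ht => by
    refine intervalIntegral.integral_mono_interval le_rfl ht.1 ht.2 ?_ ?_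
    · filter_upwards [ae_restrict_mem measurableSet_Ioc] with s hs
      exact hδnonneg s ⟨hs.1.le, hs.2⟩
    · apply ContinuousOn.intervalIntegrable
      rwa [uIcc_of_le hT.le]
  have hB : ∀ t ∈ Icc (0:ℝ) T, HasDerivWithinAt
      (fun u => ζ / (1 - β * ζ * u) + ((∫ s in (0:ℝ)..u, δ s) - ∫ s in (0:ℝ)..T, δ s))
      (β * (ζ / (1 - β * ζ * t)) ^ 2 + δ t) (Icc 0 T) t := fun t ht => by
    have hne := (hpos t ht).ne'
    have h1 : HasDerivAt (fun u => 1 - β * ζ * u) (-(β * ζ)) t := by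
      simpa using ((hasDerivAt_id t).const_mul (β * ζ)).const_sub 1
    have h2 : HasDerivAt (fun u => ζ / (1 - β * ζ * u)) (β * (ζ / (1 - β * ζ * t)) ^ 2) t := by
      refine ((hasDerivAt_const t ζ).div h1 hne).congr_deriv ?_
      rw [div_pow]
      ring
    exact h2.hasDerivWithinAt.add
      ((hasDerivWithinAt_primitive hδcont ht).sub_const _)
  intro t ht
  have key := image_le_of_deriv_right_lt_deriv_boundary'
    (fun t ht => (hderiv t ht).continuousWithinAt)
    (fun x hx => (hderiv x (Ico_subset_Icc_self hx)).mono_of_mem_nhdsWithin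
      (Icc_mem_nhdsGE_of_mem hx))
    (by simp; linarith)
    (fun t ht => (hB t ht).continuousWithinAt)
    (fun x hx => (hB x (Ico_subset_Icc_self hx)).mono_of_mem_nhdsWithin
      (Icc_mem_nhdsGE_of_mem hx))
    (fun x hx heq => by
      have hx' := Ico_subset_Icc_self hx
      have hz : 0 < ζ / (1 - β * ζ * x) := div_pos hζ (hpos x hx')
      have hyz : y x ≤ ζ / (1 - β * ζ * x) := by linarith [hint x hx']
      have h1 : α * y x ^ 2 ≤ α * (ζ / (1 - β * ζ * x)) ^ 2 :=
        mul_le_mul_of_nonneg_left (pow_le_pow_left₀ (hy x hx') hyz 2) hα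
      have h2 : α * (ζ / (1 - β * ζ * x)) ^ 2 < β * (ζ / (1 - β * ζ * x)) ^ 2 :=
        mul_lt_mul_of_pos_right hβ (by positivity)
      linarith [hineq x hx']) ht
  linarith [hint t ht]

/-- Analytic core of the robustness argument: if `w ≥ 0` satisfies
`w' ≤ δ(t) + a(t) w + c w²` on `[0,T]`, and with `α = c exp(∫₀ᵀ a)` and
`η = w(0) + ∫₀ᵀ δ` one has `α η T < 1`, then
`w(t) ≤ exp(∫₀ᵗ a) η / (1 - α η t)` on `[0,T]`. -/
theorem ode_robustness_core
    (T c w₀ : ℝ) (hT : 0 < T) (hc : 0 < c)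
    (a δ w w' : ℝ → ℝ)
    (hacont : ContinuousOn a (Icc 0 T))
    (hanonneg : ∀ t ∈ Icc (0:ℝ) T, 0 ≤ a t)
    (hδcont : ContinuousOn δ (Icc 0 T))
    (hδnonneg : ∀ t ∈ Icc (0:ℝ) T, 0 ≤ δ t)
    (hderiv : ∀ t ∈ Icc (0:ℝ) T, HasDerivWithinAt w (w' t) (Icc 0 T) t)
    (hwnonneg : ∀ t ∈ Icc (0:ℝ) T, 0 ≤ w t)
    (hw0 : w 0 = w₀)
    (hineq : ∀ t ∈ Icc (0:ℝ) T, w' t ≤ δ t + a t * w t + c * (w t) ^ 2)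
    (α η : ℝ)
    (hα : α = c * Real.exp (∫ s in (0:ℝ)..T, a s))
    (hη : η = w₀ + ∫ s in (0:ℝ)..T, δ s)
    (hsmall : α * η * T < 1) :
    ∀ t ∈ Icc (0:ℝ) T,
      w t ≤ Real.exp (∫ s in (0:ℝ)..t, a s) * η / (1 - α * η * t) := by
  intro t ht
  have hαpos : 0 < α := hα ▸ mul_pos hc (Real.exp_pos _)
  have hηnonneg : 0 ≤ η := by
    rw [hη, ← hw0]
    exact add_nonneg (hwnonneg 0 ⟨le_rfl, hT.le⟩)
      (intervalIntegral.integral_nonneg hT.le hδnonneg)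
  have hAnonneg : ∀ t ∈ Icc (0:ℝ) T, 0 ≤ ∫ s in (0:ℝ)..t, a s := fun t ht =>
    intervalIntegral.integral_nonneg ht.1 fun s hs => hanonneg s ⟨hs.1, hs.2.trans ht.2⟩
  have hAle : ∀ t ∈ Icc (0:ℝ) T, ∫ s in (0:ℝ)..t, a s ≤ ∫ s in (0:ℝ)..T, a s := fun t ht => by
    refine intervalIntegral.integral_mono_interval le_rfl ht.1 ht.2 ?_ ?_
    · filter_upwards [ae_restrict_mem measurableSet_Ioc] with s hs
      exact hanonneg s ⟨hs.1.le, hs.2⟩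
    · apply ContinuousOn.intervalIntegrable
      rwa [uIcc_of_le hT.le]
  have hyderiv : ∀ t ∈ Icc (0:ℝ) T, HasDerivWithinAt
      (fun u => w u * Real.exp (-∫ s in (0:ℝ)..u, a s))
      (w' t * Real.exp (-∫ s in (0:ℝ)..t, a s) +
        w t * (Real.exp (-∫ s in (0:ℝ)..t, a s) * -a t)) (Icc 0 T) t := fun t ht =>
    (hderiv t ht).mul (hasDerivWithinAt_primitive hacont ht).neg.exp
  have hyineq : ∀ t ∈ Icc (0:ℝ) T,
      w' t * Real.exp (-∫ s in (0:ℝ)..t, a s) +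
        w t * (Real.exp (-∫ s in (0:ℝ)..t, a s) * -a t) ≤
      δ t + α * (w t * Real.exp (-∫ s in (0:ℝ)..t, a s)) ^ 2 := fun t ht => by
    have hAT := Real.exp_le_exp.2 (hAle t ht)
    have hE1 : Real.exp (-∫ s in (0:ℝ)..t, a s) ≤ 1 :=
      Real.exp_le_one_iff.2 (neg_nonpos.2 (hAnonneg t ht))
    have hEF : Real.exp (∫ s in (0:ℝ)..t, a s) * Real.exp (-∫ s in (0:ℝ)..t, a s) = 1 := by
      rw [← Real.exp_add, add_neg_cancel, Real.exp_zero]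
    have hE0 := Real.exp_pos (-∫ s in (0:ℝ)..t, a s)
    rw [hα]
    generalize Real.exp (-∫ s in (0:ℝ)..t, a s) = E at *
    generalize Real.exp (∫ s in (0:ℝ)..t, a s) = F at *
    generalize Real.exp (∫ s in (0:ℝ)..T, a s) = G at *
    calc w' t * E + w t * (E * -a t) = (w' t - a t * w t) * E := by ring
      _ ≤ (δ t + c * w t ^ 2) * E :=
        mul_le_mul_of_nonneg_right (by linarith [hineq t ht]) hE0.le
      _ = δ t * E + c * (F * E) * w t ^ 2 * E := by rw [hEF]; ring
      _ = δ t * E + F * (c * (w t * E) ^ 2) := by ring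
      _ ≤ δ t + G * (c * (w t * E) ^ 2) :=
        add_le_add (mul_le_of_le_one_right (hδnonneg t ht) hE1)
          (mul_le_mul_of_nonneg_right hAT (by positivity))
      _ = δ t + c * G * (w t * E) ^ 2 := by ring
  have hden : 0 < 1 - α * η * t := by
    have := mul_le_mul_of_nonneg_left ht.2 (mul_nonneg hαpos.le hηnonneg)
    linarith
  have hev : ∀ᶠ ε in nhdsWithin (0:ℝ) (Ioi 0), w t * Real.exp (-∫ s in (0:ℝ)..t, a s) ≤
      (η + ε) / (1 - (α + ε) * (η + ε) * t) := by
    have hcont : Continuous fun ε : ℝ => (α + ε) * (η + ε) * T := by fun_prop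
    have hlt : ∀ᶠ ε in nhds (0:ℝ), (α + ε) * (η + ε) * T < 1 :=
      hcont.continuousAt.eventually_lt continuousAt_const (by simpa using hsmall)
    filter_upwards [nhdsWithin_le_nhds hlt, self_mem_nhdsWithin] with ε hε hε0
    have hε0 : 0 < ε := hε0
    refine riccati_le hT hαpos.le (by linarith) (by linarith) hε hδcont hδnonneg hyderiv
      (fun t ht => mul_nonneg (hwnonneg t ht) (Real.exp_pos _).le) hyineq ?_ t ht
    simp only [intervalIntegral.integral_same, neg_zero, Real.exp_zero, mul_one, hw0]
    linarith
  have hlim : Filter.Tendsto (fun ε : ℝ => (η + ε) / (1 - (α + ε) * (η + ε) * t))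
      (nhdsWithin (0:ℝ) (Ioi 0)) (nhds (η / (1 - α * η * t))) := by
    have hca : ContinuousAt (fun ε : ℝ => (η + ε) / (1 - (α + ε) * (η + ε) * t)) 0 :=
      ContinuousAt.div (by fun_prop) (by fun_prop) (by simpa using hden.ne')
    simpa using hca.tendsto.mono_left nhdsWithin_le_nhds
  have hfin := ge_of_tendsto hlim hev
  rw [Real.exp_neg, ← div_eq_mul_inv, div_le_iff₀ (Real.exp_pos _)] at hfin
  calc w t ≤ _ := hfin
    _ = _ := by ring
end

section
/- Let φ : ℝ³ → ℝ be continuous, nonnegative, supported in the closed unit ball, with ∫_{ℝ³} φ = 1, and for ε > 0 define φ^ε(x) = ε⁻³·φ(x/ε). Let f, g : ℝ³ → ℝ be continuous and satisfy |f(x) − f(y)| ≤ C_f·|x − y|^{1/2} and |g(x) − g(y)| ≤ C_g·|x − y|^{1/2} for all x, y ∈ ℝ³ (with C_f, C_g ≥ 0). Define r_ε(f,g)(x) = ∫_{ℝ³} φ^ε(y)·(f(x − y) − f(x))·(g(x − y) − g(x)) dy. Then for every ε > 0 and every x ∈ ℝ³, |r_ε(f,g)(x)| ≤ C_f·C_g·ε.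 -/
/-!
On the support of `φ^ε` one has `‖y‖ ≤ ε`, so each increment is at most `C ‖y‖^{1/2} ≤ C ε^{1/2}`
and their product is at most `C_f C_g ε`. The integrand is therefore dominated by
`φ^ε · C_f C_g ε`, and `∫ φ^ε = ∫ φ = 1` by scaling.
-/

open MeasureTheory

/-- The Constantin–E–Titi commutator remainder
`r_ε(f,g)(x) = ∫ φ^ε(y) (f(x-y) - f(x)) (g(x-y) - g(x)) dy` of two Hölder-1/2
functions satisfies `|r_ε(f,g)(x)| ≤ C_f C_g ε`. -/
theorem commutator_remainder_estimate
    (φ f g : EuclideanSpace ℝ (Fin 3) → ℝ) (Cf Cg : ℝ)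
    (hφcont : Continuous φ)
    (hφnonneg : ∀ x, 0 ≤ φ x)
    (hφsupp : ∀ x, φ x ≠ 0 → ‖x‖ ≤ 1)
    (hφint : ∫ x, φ x = 1)
    (hfcont : Continuous f) (hgcont : Continuous g)
    (hCf : 0 ≤ Cf) (hCg : 0 ≤ Cg)
    (hf : ∀ x y, |f x - f y| ≤ Cf * ‖x - y‖ ^ ((1:ℝ)/2))
    (hg : ∀ x y, |g x - g y| ≤ Cg * ‖x - y‖ ^ ((1:ℝ)/2)) :
    ∀ ε > (0:ℝ), ∀ x : EuclideanSpace ℝ (Fin 3),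
      |∫ y, ((ε ^ 3)⁻¹ * φ (ε⁻¹ • y)) * ((f (x - y) - f x) * (g (x - y) - g x))|
        ≤ Cf * Cg * ε := by
  intro ε hε x
  -- A non-integrable `φ` would have integral `0`, contradicting `hφint`.
  have hφi : Integrable φ := by
    by_contra h
    rw [integral_undef h] at hφint
    exact zero_ne_one hφint
  have hmass : ∫ y, (ε ^ 3)⁻¹ * φ (ε⁻¹ • y) = 1 := by
    rw [integral_const_mul, Measure.integral_comp_inv_smul_of_nonneg volume φ hε.le, hφint]
    simp [hε.ne']
  have hint : Integrable fun y => (ε ^ 3)⁻¹ * φ (ε⁻¹ • y) * (Cf * Cg * ε) :=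
    ((hφi.comp_smul (inv_ne_zero hε.ne')).const_mul _).mul_const _
  have hbound : ∀ y, ‖((ε ^ 3)⁻¹ * φ (ε⁻¹ • y)) * ((f (x - y) - f x) * (g (x - y) - g x))‖
      ≤ (ε ^ 3)⁻¹ * φ (ε⁻¹ • y) * (Cf * Cg * ε) := by
    intro y
    have hnn : 0 ≤ (ε ^ 3)⁻¹ * φ (ε⁻¹ • y) := mul_nonneg (by positivity) (hφnonneg _)
    rw [norm_mul, Real.norm_of_nonneg hnn]
    by_cases h0 : φ (ε⁻¹ • y) = 0
    · simp [h0]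
    refine mul_le_mul_of_nonneg_left ?_ hnn
    have hy : ‖y‖ ≤ ε := by
      have h1 := hφsupp _ h0
      rw [norm_smul, norm_inv, Real.norm_of_nonneg hε.le, inv_mul_le_iff₀ hε, mul_one] at h1
      exact h1
    have hpow : ‖y‖ ^ ((1:ℝ)/2) ≤ ε ^ ((1:ℝ)/2) :=
      Real.rpow_le_rpow (norm_nonneg _) hy (by norm_num)
    have hsq : ε ^ ((1:ℝ)/2) * ε ^ ((1:ℝ)/2) = ε := by
      rw [← Real.rpow_add hε]; norm_num
    have hxy : ‖x - y - x‖ = ‖y‖ := by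
      rw [sub_sub_cancel_left, norm_neg]
    have hf1 : |f (x - y) - f x| ≤ Cf * ε ^ ((1:ℝ)/2) := by
      have := hf (x - y) x
      rw [hxy] at this
      exact this.trans (mul_le_mul_of_nonneg_left hpow hCf)
    have hg1 : |g (x - y) - g x| ≤ Cg * ε ^ ((1:ℝ)/2) := by
      have := hg (x - y) x
      rw [hxy] at this
      exact this.trans (mul_le_mul_of_nonneg_left hpow hCg)
    rw [Real.norm_eq_abs, abs_mul]
    calc |f (x - y) - f x| * |g (x - y) - g x|
        ≤ (Cf * ε ^ ((1:ℝ)/2)) * (Cg * ε ^ ((1:ℝ)/2)) :=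
          mul_le_mul hf1 hg1 (abs_nonneg _) (by positivity)
      _ = Cf * Cg * (ε ^ ((1:ℝ)/2) * ε ^ ((1:ℝ)/2)) := by ring
      _ = Cf * Cg * ε := by rw [hsq]
  have h := norm_integral_le_of_norm_le hint (ae_of_all _ hbound)
  rwa [integral_mul_const, hmass, one_mul, Real.norm_eq_abs] at h
end

section
/- Let φ : ℝ³ → ℝ be continuous, compactly supported, with ∫_{ℝ³} φ = 1, and for ε > 0 define φ^ε(x) = ε⁻³·φ(x/ε). Let f, g : ℝ³ → ℝ be continuous and bounded, and for a function h write h^ε = φ^ε ⋆ h for its mollification, h^ε(x) = ∫_{ℝ³} φ^ε(y)·h(x − y) dy. Define r_ε(f,g)(x) = ∫_{ℝ³} φ^ε(y)·(f(x − y) − f(x))·(g(x − y) − g(x)) dy. Then for every x ∈ ℝ³ the pointwise identity (f·g)^ε(x) = f^ε(x)·g^ε(x) + r_ε(f,g)(x) − (f(x) − f^ε(x))·(g(x) − g^ε(x)) holds. -/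
/-!
Write `ψ = φ^ε`, so that `∫ ψ = 1` by the change of variables `y ↦ y / ε`. Expanding the product in
the remainder and integrating term by term gives
`r_ε(f, g)(x) = (f g)^ε(x) - g(x) f^ε(x) - f(x) g^ε(x) + f(x) g(x)`,
where the last term uses `∫ ψ = 1`; the claim is then a polynomial identity. Each term is integrable
because it is `ψ` times a continuous function, hence continuous with compact support.
-/

open MeasureTheory

/-- The Constantin–E–Titi pointwise mollification identity: for bounded continuous
`f, g` and a compactly supported mollifier `φ` with `∫ φ = 1`,
`(f g)^ε = f^ε g^ε + r_ε(f,g) - (f - f^ε)(g - g^ε)` pointwise. -/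
theorem mollification_identity
    (φ f g : EuclideanSpace ℝ (Fin 3) → ℝ)
    (hφcont : Continuous φ)
    (hφsupp : HasCompactSupport φ)
    (hφint : ∫ x, φ x = 1)
    (hfcont : Continuous f) (hgcont : Continuous g)
    (Mf Mg : ℝ)
    (hfbdd : ∀ x, |f x| ≤ Mf) (hgbdd : ∀ x, |g x| ≤ Mg) :
    ∀ ε > (0:ℝ), ∀ x : EuclideanSpace ℝ (Fin 3),
      (∫ y, ((ε ^ 3)⁻¹ * φ (ε⁻¹ • y)) * (f (x - y) * g (x - y)))
        = (∫ y, ((ε ^ 3)⁻¹ * φ (ε⁻¹ • y)) * f (x - y))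
            * (∫ y, ((ε ^ 3)⁻¹ * φ (ε⁻¹ • y)) * g (x - y))
          + (∫ y, ((ε ^ 3)⁻¹ * φ (ε⁻¹ • y)) * ((f (x - y) - f x) * (g (x - y) - g x)))
          - (f x - ∫ y, ((ε ^ 3)⁻¹ * φ (ε⁻¹ • y)) * f (x - y))
              * (g x - ∫ y, ((ε ^ 3)⁻¹ * φ (ε⁻¹ • y)) * g (x - y)) := by
  intro ε hε x
  set ψ : EuclideanSpace ℝ (Fin 3) → ℝ := fun y => (ε ^ 3)⁻¹ * φ (ε⁻¹ • y) with hψ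
  have hψcont : Continuous ψ := by fun_prop
  have hψsupp : HasCompactSupport ψ :=
    (hφsupp.comp_smul (inv_ne_zero hε.ne')).mul_left
  have hψint : ∫ y, ψ y = 1 := by
    rw [hψ, integral_const_mul, Measure.integral_comp_inv_smul_of_nonneg _ _ hε.le, hφint,
      finrank_euclideanSpace_fin, smul_eq_mul, mul_one, inv_mul_cancel₀ (by positivity)]
  have hint : ∀ h : EuclideanSpace ℝ (Fin 3) → ℝ, Continuous h →
      Integrable (fun y => ψ y * h y) := fun h hh =>
    (hψcont.mul hh).integrable_of_hasCompactSupport hψsupp.mul_right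
  have hF := hint (fun y => f (x - y)) (by fun_prop)
  have hG := hint (fun y => g (x - y)) (by fun_prop)
  have hFG := hint (fun y => f (x - y) * g (x - y)) (by fun_prop)
  have hψi : Integrable ψ := hψcont.integrable_of_hasCompactSupport hψsupp
  have hr : ∫ y, ψ y * ((f (x - y) - f x) * (g (x - y) - g x))
      = (∫ y, ψ y * (f (x - y) * g (x - y))) - g x * (∫ y, ψ y * f (x - y))
        - f x * (∫ y, ψ y * g (x - y)) + f x * g x := by
    calc ∫ y, ψ y * ((f (x - y) - f x) * (g (x - y) - g x))
        = ∫ y, (ψ y * (f (x - y) * g (x - y)) - g x * (ψ y * f (x - y))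
            - f x * (ψ y * g (x - y)) + f x * g x * ψ y) := by
          congr 1
          ext y
          ring
      _ = _ := by
          rw [integral_add, integral_sub, integral_sub, integral_const_mul, integral_const_mul,
            integral_const_mul, hψint, mul_one]
          · exact hFG
          · exact hF.const_mul _
          · exact hFG.sub (hF.const_mul _)
          · exact hG.const_mul _
          · exact (hFG.sub (hF.const_mul _)).sub (hG.const_mul _)
          · exact hψi.const_mul _
  change ∫ y, ψ y * (f (x - y) * g (x - y))
    = (∫ y, ψ y * f (x - y)) * (∫ y, ψ y * g (x - y))
      + (∫ y, ψ y * ((f (x - y) - f x) * (g (x - y) - g x)))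
      - (f x - ∫ y, ψ y * f (x - y)) * (g x - ∫ y, ψ y * g (x - y))
  rw [hr]
  ring
end
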